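/- Lemma 2 (soft covering with likelihood encoding). Fix finite alphabets 𝒰, 𝒮, 𝒵, a pmf P_S, a conditional pmf P_{U|S}, and a channel inducing P_{Z|U,S}; let P_U, P_{S|U}, P_Z be the corresponding induced distributions. For each n, generate a random codebook 𝒞 of 2^{n(R_K+R+R')} codewords uⁿ(k,m,l), k ∈ [1:2^{nR_K}], m ∈ [1:2^{nR}], l ∈ [1:2^{nR'}], each drawn i.i.d. ∼ P_U^{×n} independently. Given i.i.d. state sequence Sⁿ ∼ P_S^{×n}, independent uniform key K and message M, the likelihood encoder draws L with probability g(l|Sⁿ,K,M) ∝ P_{S|U}^{×n}(Sⁿ|uⁿ(K,M,l)), and Zⁿ is generated from (uⁿ(K,M,L), Sⁿ) through P_{Z|U,S} memorylessly; let P̂_{Zⁿ} be the induced distribution of Zⁿ (for a fixed codebook). If R' > I(U;S) and R + R_K + R' > I(U;Z), then E_𝒞[ D(P̂_{Zⁿ} ‖ P_Z^{×n}) ] → 0 as n → ∞. -/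

import Mathlib

open scoped BigOperators

noncomputable section

namespace SoftCovering

/-- `p` is a probability mass function on the finite alphabet `α`. -/
def IsPMF {α : Type} [Fintype α] (p : α → ℝ) : Prop :=
  (∀ a, 0 ≤ p a) ∧ ∑ a, p a = 1

/-- Kullback-Leibler divergence (in bits) between pmfs on a finite alphabet. -/
def klDiv {α : Type} [Fintype α] (p q : α → ℝ) : ℝ :=
  ∑ a, p a * Real.logb 2 (p a / q a)

/-- Mutual information (in bits) of a joint pmf, given in curried form. -/
def mutualInfo {α β : Type} [Fintype α] [Fintype β] (p : α → β → ℝ) : ℝ :=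
  ∑ a, ∑ b, p a b * Real.logb 2 (p a b / ((∑ b', p a b') * (∑ a', p a' b)))

variable {𝒰 𝒮 𝒵 : Type} [Fintype 𝒰] [Fintype 𝒮] [Fintype 𝒵]

/-- Marginal `P_U` of the joint distribution `P_S(s) P_{U|S}(u|s)`. -/
def PU (PS : 𝒮 → ℝ) (pU : 𝒮 → 𝒰 → ℝ) (u : 𝒰) : ℝ := ∑ s, PS s * pU s u

/-- Conditional pmf `P_{S|U}` of the joint distribution `P_S(s) P_{U|S}(u|s)`. -/
def PSgivenU (PS : 𝒮 → ℝ) (pU : 𝒮 → 𝒰 → ℝ) (s : 𝒮) (u : 𝒰) : ℝ :=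
  PS s * pU s u / PU PS pU u

/-- Marginal `P_Z` of the joint distribution `P_S(s) P_{U|S}(u|s) P_{Z|U,S}(z|u,s)`. -/
def PZ (PS : 𝒮 → ℝ) (pU : 𝒮 → 𝒰 → ℝ) (W : 𝒰 → 𝒮 → 𝒵 → ℝ) (z : 𝒵) : ℝ :=
  ∑ u, ∑ s, PS s * pU s u * W u s z

/-- A codebook: one length-`n` codeword `uⁿ(k,m,l)` for each key `k`, message
`m` and index `l`. -/
abbrev Codebook (𝒰 : Type) (n K M L : ℕ) := Fin K × Fin M × Fin L → Fin n → 𝒰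

/-- Probability of drawing the codebook `C` when all codewords are i.i.d.
`∼ P_U^{×n}`. -/
def cbProb (PU : 𝒰 → ℝ) {n K M L : ℕ} (C : Codebook 𝒰 n K M L) : ℝ :=
  ∏ idx, ∏ i, PU (C idx i)

/-- The likelihood encoder: `g(l|sⁿ,k,m) ∝ P_{S|U}^{×n}(sⁿ|uⁿ(k,m,l))`. -/
def likelihood (PS : 𝒮 → ℝ) (pU : 𝒮 → 𝒰 → ℝ) {n K M L : ℕ}
    (C : Codebook 𝒰 n K M L) (k : Fin K) (m : Fin M) (l : Fin L)
    (s : Fin n → 𝒮) : ℝ :=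
  (∏ i, PSgivenU PS pU (s i) (C (k, m, l) i)) /
    ∑ l', ∏ i, PSgivenU PS pU (s i) (C (k, m, l') i)

/-- The distribution `P̂_{Zⁿ}` of the warden's observation for a fixed codebook
`C`: `K` and `M` are uniform, `Sⁿ ∼ P_S^{×n}`, `L` is drawn by the likelihood
encoder, and `Zⁿ` is produced memorylessly from `(uⁿ(K,M,L), Sⁿ)` through
`P_{Z|U,S}`. -/
def PhatZ (PS : 𝒮 → ℝ) (pU : 𝒮 → 𝒰 → ℝ) (W : 𝒰 → 𝒮 → 𝒵 → ℝ) {n K M L : ℕ}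
    (C : Codebook 𝒰 n K M L) (z : Fin n → 𝒵) : ℝ :=
  ∑ k, ∑ m, ∑ s : Fin n → 𝒮, ∑ l,
    (K : ℝ)⁻¹ * (M : ℝ)⁻¹ * (∏ i, PS (s i)) * likelihood PS pU C k m l s *
      ∏ i, W (C (k, m, l) i) (s i) (z i)

/-- Expected divergence `E_𝒞[D(P̂_{Zⁿ} ‖ P_Z^{×n})]` over the random codebook. -/
def expDiv (PS : 𝒮 → ℝ) (pU : 𝒮 → 𝒰 → ℝ) (W : 𝒰 → 𝒮 → 𝒵 → ℝ)
    [DecidableEq 𝒰] (n K M L : ℕ) : ℝ :=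
  ∑ C : Codebook 𝒰 n K M L,
    cbProb (PU PS pU) C *
      klDiv (PhatZ PS pU W C) (fun z => ∏ i, PZ PS pU W (z i))


lemma sum_pi_prod {Ω ι : Type} [Fintype Ω] [Fintype ι] [DecidableEq ι] (F : ι → Ω → ℝ) :
    ∑ C : ι → Ω, ∏ j, F j (C j) = ∏ j, ∑ ω, F j ω := by
  rw [Finset.prod_univ_sum, Fintype.piFinset_univ]

lemma exp_one {Ω ι : Type} [Fintype Ω] [Fintype ι] [DecidableEq ι] (μ : Ω → ℝ)
    (hμ : ∑ ω, μ ω = 1) (g : Ω → ℝ) (a : ι) :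
    ∑ C : ι → Ω, (∏ j, μ (C j)) * g (C a) = ∑ ω, μ ω * g ω := by
  have h := sum_pi_prod (fun (j : ι) ω => μ ω * (if j = a then g ω else 1))
  have h2 : ∀ C : ι → Ω, ∏ j, (μ (C j) * (if j = a then g (C j) else 1))
      = (∏ j, μ (C j)) * g (C a) := by
    intro C
    rw [Finset.prod_mul_distrib, Finset.prod_ite_eq' Finset.univ a (fun j => g (C j))]
    simp
  have h3 : ∀ j : ι, ∑ ω, μ ω * (if j = a then g ω else 1)
      = if j = a then ∑ ω, μ ω * g ω else 1 := by
    intro j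
    split_ifs <;> simp [hμ]
  simp only [h2, h3] at h
  rw [h, Finset.prod_ite_eq' Finset.univ a]
  simp

lemma exp_two {Ω ι : Type} [Fintype Ω] [Fintype ι] [DecidableEq ι] (μ : Ω → ℝ)
    (hμ : ∑ ω, μ ω = 1) (g k : Ω → ℝ) (a b : ι) (hab : a ≠ b) :
    ∑ C : ι → Ω, (∏ j, μ (C j)) * (g (C a) * k (C b))
      = (∑ ω, μ ω * g ω) * (∑ ω, μ ω * k ω) := by
  have h := sum_pi_prod (fun (j : ι) ω => μ ω * ((if j = a then g ω else 1) *
    (if j = b then k ω else 1)))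
  have h2 : ∀ C : ι → Ω, ∏ j, (μ (C j) * ((if j = a then g (C j) else 1) *
      (if j = b then k (C j) else 1)))
      = (∏ j, μ (C j)) * (g (C a) * k (C b)) := by
    intro C
    rw [Finset.prod_mul_distrib, Finset.prod_mul_distrib,
      Finset.prod_ite_eq' Finset.univ a (fun j => g (C j)),
      Finset.prod_ite_eq' Finset.univ b (fun j => k (C j))]
    simp
  have h3 : ∀ j : ι, ∑ ω, μ ω * ((if j = a then g ω else 1) * (if j = b then k ω else 1))
      = (if j = a then ∑ ω, μ ω * g ω else 1) * (if j = b then ∑ ω, μ ω * k ω else 1) := by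
    intro j
    by_cases h1 : j = a
    · have : j ≠ b := by rintro rfl; exact hab h1.symm
      simp [h1, hab]
    · by_cases h2 : j = b
      · simp [h2, hab.symm]
      · simp [h1, h2, hμ]
  simp only [h2, h3] at h
  rw [h, Finset.prod_mul_distrib, Finset.prod_ite_eq' Finset.univ a,
    Finset.prod_ite_eq' Finset.univ b]
  simp

lemma exp_const {Ω ι : Type} [Fintype Ω] [Fintype ι] [DecidableEq ι] (μ : Ω → ℝ)
    (hμ : ∑ ω, μ ω = 1) :
    ∑ C : ι → Ω, (∏ j, μ (C j)) = 1 := by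
  rw [sum_pi_prod (fun _ => μ)]; simp [hμ]

lemma exp_sq {Ω ι J : Type} [Fintype Ω] [Fintype ι] [DecidableEq ι] [Fintype J]
    (μ : Ω → ℝ) (hμ0 : ∀ ω, 0 ≤ μ ω)
    (hμ : ∑ ω, μ ω = 1) (h : Ω → ℝ) (f : J → ι) (hf : Function.Injective f) :
    ∑ C : ι → Ω, (∏ j, μ (C j)) * (∑ j, (h (C (f j)) - ∑ ω, μ ω * h ω)) ^ 2
      ≤ Fintype.card J * ∑ ω, μ ω * h ω ^ 2 := by
  classical
  set m := ∑ ω, μ ω * h ω with hm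
  have hz : ∑ ω, μ ω * (h ω - m) = 0 := by
    simp only [mul_sub, Finset.sum_sub_distrib, ← Finset.sum_mul, hμ]
    rw [← hm]; ring
  have hv : ∑ ω, μ ω * ((h ω - m) * (h ω - m)) ≤ ∑ ω, μ ω * h ω ^ 2 := by
    have : ∑ ω, μ ω * ((h ω - m) * (h ω - m)) = ∑ ω, μ ω * h ω ^ 2 - m ^ 2 := by
      have e : ∀ ω, μ ω * ((h ω - m) * (h ω - m))
          = μ ω * h ω ^ 2 - 2 * m * (μ ω * h ω) + m ^ 2 * μ ω := by intro ω; ring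
      simp only [e, Finset.sum_add_distrib, Finset.sum_sub_distrib, ← Finset.mul_sum, hμ]
      rw [← hm]; ring
    rw [this]; nlinarith [sq_nonneg m]
  have e1 : ∀ C : ι → Ω, (∏ j, μ (C j)) * (∑ j, (h (C (f j)) - m)) ^ 2
      = ∑ a, ∑ b, (∏ j, μ (C j)) * ((h (C (f a)) - m) * (h (C (f b)) - m)) := by
    intro C
    rw [sq, Finset.sum_mul_sum, Finset.mul_sum]
    simp only [Finset.mul_sum]
  simp only [e1]
  rw [Finset.sum_comm]
  have e2 : ∀ a : J, ∑ C : ι → Ω, ∑ b, (∏ j, μ (C j)) * ((h (C (f a)) - m) * (h (C (f b)) - m))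
      = ∑ ω, μ ω * ((h ω - m) * (h ω - m)) := by
    intro a
    rw [Finset.sum_comm, Finset.sum_eq_single a]
    · exact exp_one μ hμ (fun ω => (h ω - m) * (h ω - m)) (f a)
    · intro b _ hb
      rw [exp_two μ hμ (fun ω => h ω - m) (fun ω => h ω - m) (f a) (f b)
        (fun h => hb (hf h).symm), hz]
      simp
    · simp
  simp only [e2, Finset.sum_const, Finset.card_univ, nsmul_eq_mul]
  exact mul_le_mul_of_nonneg_left hv (by positivity)

lemma exp_abs_le {Ω ι J : Type} [Fintype Ω] [Fintype ι] [DecidableEq ι] [Fintype J]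
    (μ : Ω → ℝ) (hμ0 : ∀ ω, 0 ≤ μ ω)
    (hμ : ∑ ω, μ ω = 1) (h : Ω → ℝ) (f : J → ι) (hf : Function.Injective f)
    (hN : 0 < (Fintype.card J : ℝ)) (t : ℝ) (ht : 0 < t) :
    ∑ C : ι → Ω, (∏ j, μ (C j)) *
        |(Fintype.card J : ℝ)⁻¹ * ∑ j, h (C (f j)) - ∑ ω, μ ω * h ω|
      ≤ (t⁻¹ * (Fintype.card J : ℝ)⁻¹ * ∑ ω, μ ω * h ω ^ 2 + t) / 2 := by
  have hsq := exp_sq μ hμ0 hμ h f hf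
  set m := ∑ ω, μ ω * h ω with hm
  set N : ℝ := (Fintype.card J : ℝ) with hNd
  have hP : ∀ C : ι → Ω, 0 ≤ ∏ j, μ (C j) := fun C => Finset.prod_nonneg fun j _ => hμ0 _
  have e : ∀ C : ι → Ω, N⁻¹ * ∑ j, h (C (f j)) - m = N⁻¹ * ∑ j, (h (C (f j)) - m) := by
    intro C
    rw [Finset.sum_sub_distrib]
    simp only [Finset.sum_const, Finset.card_univ, nsmul_eq_mul]
    rw [← hNd]; field_simp
  have am : ∀ x : ℝ, |x| ≤ (t⁻¹ * x ^ 2 + t) / 2 := by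
    intro x
    have h1 : t⁻¹ * x ^ 2 + t - 2 * |x| = t⁻¹ * (|x| - t) ^ 2 := by
      rw [← sq_abs x]; field_simp; ring
    have : 0 ≤ t⁻¹ * (|x| - t) ^ 2 := by positivity
    linarith
  calc _ ≤ ∑ C : ι → Ω, (∏ j, μ (C j)) *
        ((t⁻¹ * (N⁻¹ * ∑ j, (h (C (f j)) - m)) ^ 2 + t) / 2) := by
        refine Finset.sum_le_sum fun C _ => mul_le_mul_of_nonneg_left ?_ (hP C)
        rw [e]; exact am _
    _ = (t⁻¹ * N⁻¹ ^ 2 * ∑ C : ι → Ω, (∏ j, μ (C j)) * (∑ j, (h (C (f j)) - m)) ^ 2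
          + t * ∑ C : ι → Ω, (∏ j, μ (C j))) / 2 := by
        rw [Finset.mul_sum, Finset.mul_sum, ← Finset.sum_add_distrib, Finset.sum_div]
        refine Finset.sum_congr rfl fun C _ => ?_
        ring
    _ ≤ (t⁻¹ * N⁻¹ ^ 2 * (N * ∑ ω, μ ω * h ω ^ 2) + t * 1) / 2 := by
        rw [exp_const μ hμ]
        gcongr
    _ = _ := by field_simp

lemma exp_abs_le' {Ω ι J : Type} [Fintype Ω] [Fintype ι] [DecidableEq ι] [Fintype J]
    (μ : Ω → ℝ) (hμ0 : ∀ ω, 0 ≤ μ ω)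
    (hμ : ∑ ω, μ ω = 1) (h : Ω → ℝ) (h0 : ∀ ω, 0 ≤ h ω) (f : J → ι)
    (hN : 0 < (Fintype.card J : ℝ)) :
    ∑ C : ι → Ω, (∏ j, μ (C j)) *
        |(Fintype.card J : ℝ)⁻¹ * ∑ j, h (C (f j)) - ∑ ω, μ ω * h ω|
      ≤ 2 * ∑ ω, μ ω * h ω := by
  set m := ∑ ω, μ ω * h ω with hm
  have hm0 : 0 ≤ m := Finset.sum_nonneg fun ω _ => mul_nonneg (hμ0 _) (h0 _)
  set N : ℝ := (Fintype.card J : ℝ) with hNd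
  have hP : ∀ C : ι → Ω, 0 ≤ ∏ j, μ (C j) := fun C => Finset.prod_nonneg fun j _ => hμ0 _
  calc _ ≤ ∑ C : ι → Ω, (∏ j, μ (C j)) * (N⁻¹ * ∑ j, h (C (f j)) + m) := by
        refine Finset.sum_le_sum fun C _ => mul_le_mul_of_nonneg_left ?_ (hP C)
        have : 0 ≤ N⁻¹ * ∑ j, h (C (f j)) :=
          mul_nonneg (by positivity) (Finset.sum_nonneg fun j _ => h0 _)
        rw [abs_le]; constructor <;> linarith
    _ = N⁻¹ * ∑ j, ∑ C : ι → Ω, (∏ j, μ (C j)) * h (C (f j))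
          + m * ∑ C : ι → Ω, (∏ j, μ (C j)) := by
        rw [Finset.sum_comm, Finset.mul_sum, Finset.mul_sum, ← Finset.sum_add_distrib]
        refine Finset.sum_congr rfl fun C _ => ?_
        rw [← Finset.mul_sum]; ring
    _ = _ := by
        rw [exp_const μ hμ]
        simp only [exp_one μ hμ]
        simp only [Finset.sum_const, Finset.card_univ, nsmul_eq_mul]
        rw [← hm, ← hNd]; field_simp; ring

/-- One-shot soft covering bound in total variation. -/
lemma oneshot {Ω Y ι J : Type} [Fintype Ω] [Fintype Y] [Fintype ι] [DecidableEq ι] [Fintype J]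
    (μ : Ω → ℝ) (hμ0 : ∀ ω, 0 ≤ μ ω) (hμ : ∑ ω, μ ω = 1)
    (w : Ω → Y → ℝ) (hw : ∀ ω y, 0 ≤ w ω y) (q : Y → ℝ) (hq : ∀ y, ∑ ω, μ ω * w ω y = q y)
    (hq1 : ∑ y, q y = 1)
    (f : J → ι) (hf : Function.Injective f)
    (hN : 0 < (Fintype.card J : ℝ)) (t τ : ℝ) (ht : 0 < t) (hτ : 0 < τ) :
    ∑ C : ι → Ω, (∏ j, μ (C j)) *
        ∑ y, |(Fintype.card J : ℝ)⁻¹ * ∑ j, w (C (f j)) y - q y|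
      ≤ (τ / (t * Fintype.card J) + t) / 2
        + 2 * ∑ ω, ∑ y, if τ * q y < w ω y then μ ω * w ω y else 0 := by
  have hP : ∀ C : ι → Ω, 0 ≤ ∏ j, μ (C j) := fun C => Finset.prod_nonneg fun j _ => hμ0 _
  have hq0 : ∀ y, 0 ≤ q y := fun y => by
    rw [← hq]; exact Finset.sum_nonneg fun ω _ => mul_nonneg (hμ0 _) (hw _ _)
  set N : ℝ := (Fintype.card J : ℝ) with hNd
  let h : Y → Ω → ℝ := fun y ω => if τ * q y < w ω y then 0 else w ω y
  let r : Y → Ω → ℝ := fun y ω => if τ * q y < w ω y then w ω y else 0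
  have hsum : ∀ y ω, w ω y = h y ω + r y ω := by
    intro y ω; simp only [h, r]; split_ifs <;> simp
  have key : ∀ y, ∑ C : ι → Ω, (∏ j, μ (C j)) * |N⁻¹ * ∑ j, w (C (f j)) y - q y|
      ≤ q y * ((τ / (t * N) + t) / 2) + 2 * ∑ ω, μ ω * r y ω := by
    intro y
    have A : ∑ C : ι → Ω, (∏ j, μ (C j)) *
        |N⁻¹ * ∑ j, h y (C (f j)) - ∑ ω, μ ω * h y ω| ≤ q y * ((τ / (t * N) + t) / 2) := by
      rcases (hq0 y).eq_or_lt with hy | hy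
      · have : ∀ ω, h y ω = 0 := by
          intro ω; simp only [h, ← hy]
          split_ifs with h1
          · rfl
          · exact le_antisymm (by linarith) (hw _ _)
        simp [this, ← hy]
      · refine (exp_abs_le μ hμ0 hμ (h y) f hf hN (t * q y) (by positivity)).trans ?_
        rw [← hNd]
        have : ∑ ω, μ ω * h y ω ^ 2 ≤ τ * q y * q y := by
          calc _ ≤ ∑ ω, τ * q y * (μ ω * w ω y) := by
                refine Finset.sum_le_sum fun ω _ => ?_
                have : h y ω ^ 2 ≤ τ * q y * w ω y := by
                  simp only [h]
                  split_ifs with h1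
                  · have := hw ω y
                    rw [zero_pow two_ne_zero]; positivity
                  · rw [sq]; exact mul_le_mul_of_nonneg_right (by linarith) (hw _ _)
                calc μ ω * h y ω ^ 2 ≤ μ ω * (τ * q y * w ω y) :=
                      mul_le_mul_of_nonneg_left this (hμ0 _)
                  _ = _ := by ring
            _ = _ := by rw [← Finset.mul_sum, hq]
        calc _ ≤ ((t * q y)⁻¹ * N⁻¹ * (τ * q y * q y) + t * q y) / 2 := by gcongr
          _ = _ := by field_simp
    have B := exp_abs_le' μ hμ0 hμ (r y) (fun ω => by
      simp only [r]; split_ifs; exacts [hw _ _, le_rfl]) f hN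
    rw [← hNd] at B
    refine le_trans ?_ (add_le_add A B)
    rw [← Finset.sum_add_distrib]
    refine Finset.sum_le_sum fun C _ => ?_
    rw [← mul_add]
    refine mul_le_mul_of_nonneg_left ?_ (hP C)
    refine le_trans (le_of_eq ?_) (abs_add_le _ _)
    congr 1
    rw [← hq y]
    simp only [hsum y, mul_add, Finset.sum_add_distrib]
    ring
  calc _ = ∑ y, ∑ C : ι → Ω, (∏ j, μ (C j)) * |N⁻¹ * ∑ j, w (C (f j)) y - q y| := by
        simp only [Finset.mul_sum]; rw [Finset.sum_comm]
    _ ≤ ∑ y, (q y * ((τ / (t * N) + t) / 2) + 2 * ∑ ω, μ ω * r y ω) :=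
        Finset.sum_le_sum fun y _ => key y
    _ = _ := by
        rw [Finset.sum_add_distrib, ← Finset.sum_mul, hq1, one_mul, ← Finset.mul_sum,
          Finset.sum_comm]
        simp only [r, mul_ite, mul_zero]

lemma chernoff_exists {α β : Type} [Fintype α] [Fintype β] (p : α → β → ℝ)
    (hp : ∀ a b, 0 ≤ p a b) (hs : ∑ a, ∑ b, p a b = 1) (δ : ℝ) (hδ : 0 < δ) :
    ∃ ρ : ℝ, 0 < ρ ∧ ∑ a, ∑ b, p a b *
      (p a b / (∑ b', p a b') / (∑ a', p a' b) / (2 : ℝ) ^ (mutualInfo p + δ)) ^ ρ < 1 := by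
  set T : ℝ := (2 : ℝ) ^ (mutualInfo p + δ) with hT
  have hT0 : 0 < T := by positivity
  have hl2 : 0 < Real.log 2 := Real.log_pos (by norm_num)
  set r : α → β → ℝ := fun a b => p a b / (∑ b', p a b') / (∑ a', p a' b) with hr
  have hrpos : ∀ a b, 0 < p a b → 0 < r a b := by
    intro a b h
    have h1 : 0 < ∑ b', p a b' :=
      h.trans_le (Finset.single_le_sum (f := fun b' => p a b') (fun i _ => hp a i)
        (Finset.mem_univ b))
    have h2 : 0 < ∑ a', p a' b :=
      h.trans_le (Finset.single_le_sum (f := fun a' => p a' b) (fun i _ => hp i b)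
        (Finset.mem_univ a))
    simp only [hr]; positivity
  have hd : HasDerivAt (fun ρ : ℝ => ∑ a, ∑ b, p a b * (r a b / T) ^ ρ)
      (∑ a, ∑ b, p a b * Real.log (r a b / T)) 0 := by
    refine HasDerivAt.fun_sum fun a _ => HasDerivAt.fun_sum fun b _ => ?_
    rcases (hp a b).eq_or_lt with h | h
    · simp only [← h, zero_mul]; exact hasDerivAt_const _ _
    · have h1 : 0 < r a b / T := div_pos (hrpos a b h) hT0
      have := (Real.hasStrictDerivAt_const_rpow h1 0).hasDerivAt
      simpa using this.const_mul (p a b)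
  have hval : ∑ a, ∑ b, p a b * Real.log (r a b / T) = -(δ * Real.log 2) := by
    have e : ∀ a b, p a b * Real.log (r a b / T)
        = Real.log 2 * (p a b * Real.logb 2 (p a b / ((∑ b', p a b') * (∑ a', p a' b))))
          - p a b * ((mutualInfo p + δ) * Real.log 2) := by
      intro a b
      rcases (hp a b).eq_or_lt with h | h
      · simp [← h]
      · rw [Real.log_div (hrpos a b h).ne' hT0.ne', hT, Real.log_rpow (by norm_num), ← div_div,
          Real.logb]
        field_simp
        simp only [hr]
        ring
    simp only [e, Finset.sum_sub_distrib, ← Finset.mul_sum, ← Finset.sum_mul, hs]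
    change Real.log 2 * mutualInfo p - _ = _
    ring
  rw [hval] at hd
  have hsl := hasDerivAt_iff_tendsto_slope.1 hd
  have hev : ∀ᶠ x in nhdsWithin (0:ℝ) {0}ᶜ,
      slope (fun ρ : ℝ => ∑ a, ∑ b, p a b * (r a b / T) ^ ρ) 0 x < 0 :=
    hsl.eventually (gt_mem_nhds (by nlinarith [mul_pos hδ hl2]))
  have hev2 : ∀ᶠ x in nhdsWithin (0:ℝ) (Set.Ioi 0),
      slope (fun ρ : ℝ => ∑ a, ∑ b, p a b * (r a b / T) ^ ρ) 0 x < 0 :=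
    hev.filter_mono (nhdsWithin_mono _ (by intro x hx; simpa using (ne_of_gt hx)))
  obtain ⟨ρ, h1, h2⟩ := (hev2.and self_mem_nhdsWithin).exists
  have h2' : 0 < ρ := h2
  refine ⟨ρ, h2', ?_⟩
  rw [slope_def_field] at h1
  simp only [Real.rpow_zero, mul_one, hs, sub_zero] at h1
  rw [div_lt_iff₀ h2'] at h1
  linarith

lemma sum_sum_prod {α β : Type} [Fintype α] [Fintype β] (G : α → β → ℝ) (n : ℕ) :
    ∑ u : Fin n → α, ∑ y : Fin n → β, ∏ i, G (u i) (y i) = (∑ a, ∑ b, G a b) ^ n := by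
  have : ∀ u : Fin n → α, ∑ y : Fin n → β, ∏ i, G (u i) (y i) = ∏ i, ∑ b, G (u i) b :=
    fun u => sum_pi_prod (fun i b => G (u i) b)
  simp only [this]
  rw [sum_pi_prod (fun (_ : Fin n) a => ∑ b, G a b)]
  simp

lemma tail_le {α β : Type} [Fintype α] [Fintype β] (p : α → β → ℝ)
    (hp : ∀ a b, 0 ≤ p a b) (T ρ : ℝ) (hT : 0 < T) (hρ : 0 < ρ) (n : ℕ) :
    ∑ u : Fin n → α, ∑ y : Fin n → β,
      (if T ^ n * ∏ i, (∑ a', p a' (y i)) < ∏ i, (p (u i) (y i) / ∑ b', p (u i) b') then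
        (∏ i, ∑ b', p (u i) b') * ∏ i, (p (u i) (y i) / ∑ b', p (u i) b') else 0)
      ≤ (∑ a, ∑ b, p a b * (p a b / (∑ b', p a b') / (∑ a', p a' b) / T) ^ ρ) ^ n := by
  have hpa : ∀ a, 0 ≤ ∑ b', p a b' := fun a => Finset.sum_nonneg fun b _ => hp a b
  have hpb : ∀ b, 0 ≤ ∑ a', p a' b := fun b => Finset.sum_nonneg fun a _ => hp a b
  have hpos : ∀ a b, 0 < p a b → 0 < (∑ b', p a b') ∧ 0 < ∑ a', p a' b := by
    intro a b h
    exact ⟨h.trans_le (Finset.single_le_sum (f := fun b' => p a b') (fun i _ => hp a i)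
        (Finset.mem_univ b)), h.trans_le (Finset.single_le_sum (f := fun a' => p a' b)
        (fun i _ => hp i b) (Finset.mem_univ a))⟩
  rw [← sum_sum_prod]
  refine Finset.sum_le_sum fun u _ => Finset.sum_le_sum fun y _ => ?_
  have hR : 0 ≤ ∏ i, p (u i) (y i) * (p (u i) (y i) / (∑ b', p (u i) b') /
      (∑ a', p a' (y i)) / T) ^ ρ := by
    refine Finset.prod_nonneg fun i _ => mul_nonneg (hp _ _) (Real.rpow_nonneg ?_ _)
    have := hpa (u i); have := hpb (y i); have := hp (u i) (y i)
    positivity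
  split_ifs with hlt
  swap
  · exact hR
  by_cases hz : ∃ i, p (u i) (y i) = 0
  · obtain ⟨i, hi⟩ := hz
    have : ∏ i, (p (u i) (y i) / ∑ b', p (u i) b') = 0 :=
      Finset.prod_eq_zero (Finset.mem_univ i) (by simp [hi])
    rw [this, mul_zero]; exact hR
  · push Not at hz
    have hpp : ∀ i, 0 < p (u i) (y i) := fun i => lt_of_le_of_ne (hp _ _) (hz i).symm
    have e1 : ∏ i, ((∑ b', p (u i) b') * (p (u i) (y i) / ∑ b', p (u i) b'))
        = ∏ i, p (u i) (y i) :=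
      Finset.prod_congr rfl fun i _ => mul_div_cancel₀ _ (hpos _ _ (hpp i)).1.ne'
    rw [← Finset.prod_mul_distrib, e1, Finset.prod_mul_distrib]
    refine le_mul_of_one_le_right (Finset.prod_nonneg fun i _ => hp _ _) ?_
    rw [Real.finsetProd_rpow]
    · apply Real.one_le_rpow _ hρ.le
      rw [Finset.prod_div_distrib, Finset.prod_div_distrib]
      simp only [Finset.prod_const, Finset.card_univ, Fintype.card_fin]
      have : 0 < ∏ i, ∑ a', p a' (y i) := Finset.prod_pos fun i _ => (hpos _ _ (hpp i)).2
      rw [div_div, one_le_div (by positivity), mul_comm]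
      exact hlt.le
    · intro i _
      have := hpa (u i); have := hpb (y i); have := hp (u i) (y i)
      positivity

lemma soft_tv {α β : Type} [Fintype α] [Fintype β] (p : α → β → ℝ)
    (hp : ∀ a b, 0 ≤ p a b) (hs : ∑ a, ∑ b, p a b = 1) (R : ℝ) (hI : mutualInfo p < R) :
    ∃ x : ℝ, 0 ≤ x ∧ x < 1 ∧ ∀ (n : ℕ) (ι J : Type) [Fintype ι] [DecidableEq ι] [Fintype J]
      (f : J → ι), Function.Injective f → (2 : ℝ) ^ ((n : ℝ) * R) ≤ Fintype.card J →
      ∑ C : ι → Fin n → α, (∏ j, ∏ i, ∑ b', p (C j i) b') *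
        ∑ z : Fin n → β, |(Fintype.card J : ℝ)⁻¹ *
          ∑ j, ∏ i, (p (C (f j) i) (z i) / ∑ b', p (C (f j) i) b') - ∏ i, ∑ a', p a' (z i)|
      ≤ 3 * x ^ n := by
  have hpa : ∀ a, 0 ≤ ∑ b', p a b' := fun a => Finset.sum_nonneg fun b _ => hp a b
  obtain ⟨δ, hδ, hR⟩ : ∃ δ : ℝ, 0 < δ ∧ R = mutualInfo p + 3 * δ :=
    ⟨(R - mutualInfo p) / 3, by linarith, by ring⟩
  obtain ⟨ρ, hρ, hφ⟩ := chernoff_exists p hp hs δ hδ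
  set T : ℝ := (2 : ℝ) ^ (mutualInfo p + δ) with hT
  have hT0 : 0 < T := by positivity
  set φ := ∑ a, ∑ b, p a b *
      (p a b / (∑ b', p a b') / (∑ a', p a' b) / T) ^ ρ with hφd
  have hφ0 : 0 ≤ φ := by
    refine Finset.sum_nonneg fun a _ => Finset.sum_nonneg fun b _ =>
      mul_nonneg (hp _ _) (Real.rpow_nonneg ?_ _)
    have h1 := hpa a
    have h2 : 0 ≤ ∑ a', p a' b := Finset.sum_nonneg fun a _ => hp a b
    have := hp a b
    positivity
  set e : ℝ := (2 : ℝ) ^ (-δ) with he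
  have he0 : 0 < e := by positivity
  have he1 : e < 1 := Real.rpow_lt_one_of_one_lt_of_neg (by norm_num) (by linarith)
  refine ⟨max e φ, le_max_of_le_left he0.le, max_lt he1 hφ, ?_⟩
  intro n ι J _ _ _ f hf hN
  have hN0 : 0 < (Fintype.card J : ℝ) := lt_of_lt_of_le (by positivity) hN
  have main := oneshot (fun u : Fin n → α => ∏ i, ∑ b', p (u i) b')
    (fun u => Finset.prod_nonneg fun i _ => hpa _)
    (by rw [sum_pi_prod (fun (_ : Fin n) a => ∑ b', p a b')]; simp [hs])
    (fun u (y : Fin n → β) => ∏ i, (p (u i) (y i) / ∑ b', p (u i) b'))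
    (fun u y => Finset.prod_nonneg fun i _ => div_nonneg (hp _ _) (hpa _))
    (fun y => ∏ i, ∑ a', p a' (y i))
    (by
      intro y
      simp only [← Finset.prod_mul_distrib]
      rw [sum_pi_prod (fun (i : Fin n) a => (∑ b', p a b') * (p a (y i) / ∑ b', p a b'))]
      refine Finset.prod_congr rfl fun i _ => Finset.sum_congr rfl fun a _ => ?_
      by_cases h : ∑ b', p a b' = 0
      · have := (Finset.sum_eq_zero_iff_of_nonneg (fun b _ => hp a b)).1 h (y i)
          (Finset.mem_univ _)
        simp [this]
      · exact mul_div_cancel₀ _ h)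
    (by
      rw [sum_pi_prod (fun (_ : Fin n) b => ∑ a', p a' b), Finset.sum_comm]; simp [hs])
    f hf hN0 (e ^ n) (T ^ n) (by positivity) (by positivity)
  refine main.trans ?_
  have h1 := tail_le p hp T ρ hT0 hρ n
  rw [← hφd] at h1
  have h2 : T ^ n / (e ^ n * Fintype.card J) ≤ e ^ n := by
    rw [div_le_iff₀ (by positivity)]
    calc T ^ n = e ^ n * (e ^ n * (2 : ℝ) ^ ((n : ℝ) * R)) := by
          rw [hT, he, ← Real.rpow_mul_natCast (by norm_num), ← Real.rpow_mul_natCast (by norm_num),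
            ← Real.rpow_add (by norm_num), ← Real.rpow_add (by norm_num)]
          congr 1
          rw [hR]; ring
      _ ≤ _ := by gcongr
  have h3 : e ^ n ≤ (max e φ) ^ n := pow_le_pow_left₀ he0.le (le_max_left _ _) n
  have h4 : φ ^ n ≤ (max e φ) ^ n := pow_le_pow_left₀ hφ0 (le_max_right _ _) n
  linarith

lemma kl_abs_le {α : Type} [Fintype α] (p q : α → ℝ) (hp : ∀ a, 0 ≤ p a) (hq : ∀ a, 0 ≤ q a)
    (B : ℝ) (hB : 1 ≤ B) (hpq : ∀ a, p a ≤ B * q a) :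
    |klDiv p q| ≤ (1 + Real.log B) / Real.log 2 * ∑ a, |p a - q a| := by
  have hl2 : 0 < Real.log 2 := Real.log_pos (by norm_num)
  have hlB : 0 ≤ Real.log B := Real.log_nonneg hB
  unfold klDiv
  refine (Finset.abs_sum_le_sum_abs _ _).trans ?_
  rw [Finset.mul_sum]
  refine Finset.sum_le_sum fun a _ => ?_
  have key : |p a * Real.log (p a / q a)| ≤ (1 + Real.log B) * |p a - q a| := by
    rcases (hp a).eq_or_lt with h | h
    · rw [← h]; simp; positivity
    · have hqa : 0 < q a := by
        rcases (hq a).eq_or_lt with h' | h'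
        · have := hpq a; rw [← h'] at this; linarith
        · exact h'
      have hr : 0 < p a / q a := div_pos h hqa
      have lo : p a - q a ≤ p a * Real.log (p a / q a) := by
        have := mul_le_mul_of_nonneg_left (Real.one_sub_inv_le_log_of_pos hr) h.le
        refine le_trans (le_of_eq ?_) this
        field_simp
      have hab : |p a - q a| ≤ (1 + Real.log B) * |p a - q a| := by
        nlinarith [abs_nonneg (p a - q a)]
      rw [abs_le]
      constructor
      · linarith [neg_abs_le (p a - q a)]
      · rcases le_total (p a) (q a) with hle | hle
        · have : Real.log (p a / q a) ≤ 0 :=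
            Real.log_nonpos hr.le ((div_le_one hqa).2 hle)
          have h1 : p a * Real.log (p a / q a) ≤ 0 := mul_nonpos_of_nonneg_of_nonpos h.le this
          have h2 := abs_nonneg (p a - q a)
          linarith
        · have h1 : Real.log (p a / q a) ≤ Real.log B :=
            Real.log_le_log hr ((div_le_iff₀ hqa).2 (hpq a))
          have h2 : q a * Real.log (p a / q a) ≤ p a - q a := by
            have := mul_le_mul_of_nonneg_left (Real.log_le_sub_one_of_pos hr) hqa.le
            refine this.trans (le_of_eq ?_)
            field_simp
          have h3 : (p a - q a) * Real.log (p a / q a) ≤ (p a - q a) * Real.log B :=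
            mul_le_mul_of_nonneg_left h1 (by linarith)
          rw [abs_of_nonneg (by linarith)]
          linarith
  rw [Real.logb, ← mul_div_assoc, abs_div, abs_of_pos hl2, div_mul_eq_mul_div]
  exact div_le_div_of_nonneg_right key hl2.le

section
variable {𝒰 𝒮 𝒵 : Type} [Fintype 𝒰] [Fintype 𝒮] [Fintype 𝒵]

lemma PU_nonneg (PS : 𝒮 → ℝ) (pU : 𝒮 → 𝒰 → ℝ) (hPS : IsPMF PS) (hpU : ∀ s, IsPMF (pU s))
    (u : 𝒰) : 0 ≤ PU PS pU u :=
  Finset.sum_nonneg fun s _ => mul_nonneg (hPS.1 s) ((hpU s).1 u)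

lemma PSgU_nonneg (PS : 𝒮 → ℝ) (pU : 𝒮 → 𝒰 → ℝ) (hPS : IsPMF PS) (hpU : ∀ s, IsPMF (pU s))
    (s : 𝒮) (u : 𝒰) : 0 ≤ PSgivenU PS pU s u :=
  div_nonneg (mul_nonneg (hPS.1 s) ((hpU s).1 u)) (PU_nonneg PS pU hPS hpU u)

lemma prod_PSgU_nonneg (PS : 𝒮 → ℝ) (pU : 𝒮 → 𝒰 → ℝ) (hPS : IsPMF PS)
    (hpU : ∀ s, IsPMF (pU s)) {n : ℕ} (s : Fin n → 𝒮) (u : Fin n → 𝒰) :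
    0 ≤ ∏ i, PSgivenU PS pU (s i) (u i) :=
  Finset.prod_nonneg fun i _ => PSgU_nonneg PS pU hPS hpU _ _

lemma lik_nonneg (PS : 𝒮 → ℝ) (pU : 𝒮 → 𝒰 → ℝ) (hPS : IsPMF PS) (hpU : ∀ s, IsPMF (pU s))
    {n K M L : ℕ} (C : Codebook 𝒰 n K M L) (k : Fin K) (m : Fin M) (l : Fin L)
    (s : Fin n → 𝒮) : 0 ≤ likelihood PS pU C k m l s :=
  div_nonneg (prod_PSgU_nonneg PS pU hPS hpU _ _)
    (Finset.sum_nonneg fun _ _ => prod_PSgU_nonneg PS pU hPS hpU _ _)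

lemma sum_lik_le (PS : 𝒮 → ℝ) (pU : 𝒮 → 𝒰 → ℝ)
    {n K M L : ℕ} (C : Codebook 𝒰 n K M L) (k : Fin K) (m : Fin M)
    (s : Fin n → 𝒮) : ∑ l, likelihood PS pU C k m l s ≤ 1 := by
  unfold likelihood
  rw [← Finset.sum_div]
  exact div_self_le_one _

lemma PhatZ_nonneg (PS : 𝒮 → ℝ) (pU : 𝒮 → 𝒰 → ℝ) (W : 𝒰 → 𝒮 → 𝒵 → ℝ)
    (hPS : IsPMF PS) (hpU : ∀ s, IsPMF (pU s)) (hW : ∀ u s, IsPMF (W u s))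
    {n K M L : ℕ} (C : Codebook 𝒰 n K M L) (z : Fin n → 𝒵) : 0 ≤ PhatZ PS pU W C z := by
  refine Finset.sum_nonneg fun k _ => Finset.sum_nonneg fun m _ => Finset.sum_nonneg fun s _ =>
    Finset.sum_nonneg fun l _ => ?_
  have h1 : 0 ≤ ∏ i, PS (s i) := Finset.prod_nonneg fun i _ => hPS.1 _
  have h2 := lik_nonneg PS pU hPS hpU C k m l s
  have h3 : 0 ≤ ∏ i, W (C (k, m, l) i) (s i) (z i) := Finset.prod_nonneg fun i _ => (hW _ _).1 _
  positivity

lemma PhatZ_le_one (PS : 𝒮 → ℝ) (pU : 𝒮 → 𝒰 → ℝ) (W : 𝒰 → 𝒮 → 𝒵 → ℝ)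
    (hPS : IsPMF PS) (hpU : ∀ s, IsPMF (pU s)) (hW : ∀ u s, IsPMF (W u s))
    {n K M L : ℕ} (C : Codebook 𝒰 n K M L) (z : Fin n → 𝒵) : PhatZ PS pU W C z ≤ 1 := by
  have hW1 : ∀ u s z, W u s z ≤ 1 := fun u s z => by
    rw [← (hW u s).2]
    exact Finset.single_le_sum (fun i _ => (hW u s).1 i) (Finset.mem_univ z)
  calc PhatZ PS pU W C z
      ≤ ∑ k : Fin K, ∑ m : Fin M, ∑ s : Fin n → 𝒮, (K : ℝ)⁻¹ * (M : ℝ)⁻¹ * (∏ i, PS (s i)) := by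
        refine Finset.sum_le_sum fun k _ => Finset.sum_le_sum fun m _ =>
          Finset.sum_le_sum fun s _ => ?_
        have h1 : 0 ≤ ∏ i, PS (s i) := Finset.prod_nonneg fun i _ => hPS.1 _
        calc _ ≤ ∑ l, (K : ℝ)⁻¹ * (M : ℝ)⁻¹ * (∏ i, PS (s i)) * likelihood PS pU C k m l s := by
              refine Finset.sum_le_sum fun l _ => ?_
              have h2 := lik_nonneg PS pU hPS hpU C k m l s
              refine mul_le_of_le_one_right (by positivity) ?_
              exact Finset.prod_le_one (fun i _ => (hW _ _).1 _) fun i _ => hW1 _ _ _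
          _ ≤ _ := by
              rw [← Finset.mul_sum]
              exact mul_le_of_le_one_right (by positivity) (sum_lik_le PS pU C k m s)
    _ = ((K : ℝ) * (K : ℝ)⁻¹) * ((M : ℝ) * (M : ℝ)⁻¹) := by
        simp only [← Finset.mul_sum]
        rw [sum_pi_prod (fun (_ : Fin n) s => PS s)]
        simp [hPS.2]; ring
    _ ≤ 1 * 1 := by
        exact mul_le_mul mul_inv_le_one mul_inv_le_one (by positivity) zero_le_one
    _ = 1 := by ring

lemma PZ_nonneg (PS : 𝒮 → ℝ) (pU : 𝒮 → 𝒰 → ℝ) (W : 𝒰 → 𝒮 → 𝒵 → ℝ)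
    (hPS : IsPMF PS) (hpU : ∀ s, IsPMF (pU s)) (hW : ∀ u s, IsPMF (W u s)) (z : 𝒵) :
    0 ≤ PZ PS pU W z :=
  Finset.sum_nonneg fun u _ => Finset.sum_nonneg fun s _ =>
    mul_nonneg (mul_nonneg (hPS.1 s) ((hpU s).1 u)) ((hW u s).1 z)

lemma PhatZ_eq_zero (PS : 𝒮 → ℝ) (pU : 𝒮 → 𝒰 → ℝ) (W : 𝒰 → 𝒮 → 𝒵 → ℝ)
    (hPS : IsPMF PS) (hpU : ∀ s, IsPMF (pU s)) (hW : ∀ u s, IsPMF (W u s))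
    {n K M L : ℕ} (C : Codebook 𝒰 n K M L) (z : Fin n → 𝒵)
    (hz : ∏ i, PZ PS pU W (z i) = 0) : PhatZ PS pU W C z = 0 := by
  obtain ⟨i, -, hi⟩ := Finset.prod_eq_zero_iff.1 hz
  have h0 : ∀ u s, PS s * pU s u * W u s (z i) = 0 := by
    intro u s
    have hn : ∀ u s, 0 ≤ PS s * pU s u * W u s (z i) := fun u s =>
      mul_nonneg (mul_nonneg (hPS.1 s) ((hpU s).1 u)) ((hW u s).1 _)
    have h1 := (Finset.sum_eq_zero_iff_of_nonneg
      (fun u _ => Finset.sum_nonneg fun s _ => hn u s)).1 hi u (Finset.mem_univ _)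
    exact (Finset.sum_eq_zero_iff_of_nonneg (fun s _ => hn u s)).1 h1 s (Finset.mem_univ _)
  refine Finset.sum_eq_zero fun k _ => Finset.sum_eq_zero fun m _ => Finset.sum_eq_zero fun s _ =>
    Finset.sum_eq_zero fun l _ => ?_
  rcases mul_eq_zero.1 (h0 (C (k, m, l) i) (s i)) with h | h
  · have : likelihood PS pU C k m l s = 0 := by
      unfold likelihood
      rw [Finset.prod_eq_zero (Finset.mem_univ i), zero_div]
      simp [PSgivenU, h]
    rw [this]; ring
  · rw [Finset.prod_eq_zero (f := fun i => W (C (k, m, l) i) (s i) (z i)) (Finset.mem_univ i) h,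
      mul_zero]

lemma encoder_tv (PS : 𝒮 → ℝ) (pU : 𝒮 → 𝒰 → ℝ) (hPS : IsPMF PS) (hpU : ∀ s, IsPMF (pU s))
    {n K M L : ℕ} (C : Codebook 𝒰 n K M L) (k : Fin K) (m : Fin M) (s : Fin n → 𝒮) :
    ∑ l, |(∏ i, PS (s i)) * likelihood PS pU C k m l s
        - (L : ℝ)⁻¹ * ∏ i, PSgivenU PS pU (s i) (C (k, m, l) i)|
      ≤ |(L : ℝ)⁻¹ * ∑ l, ∏ i, PSgivenU PS pU (s i) (C (k, m, l) i) - ∏ i, PS (s i)| := by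
  unfold likelihood
  set a : Fin L → ℝ := fun l => ∏ i, PSgivenU PS pU (s i) (C (k, m, l) i) with ha
  have ha0 : ∀ l, 0 ≤ a l := fun l => prod_PSgU_nonneg PS pU hPS hpU _ _
  set P := ∏ i, PS (s i)
  change ∑ l, |P * (a l / ∑ l', a l') - (L : ℝ)⁻¹ * a l| ≤ |(L : ℝ)⁻¹ * ∑ l, a l - P|
  by_cases h : ∑ l', a l' = 0
  · have : ∀ l, a l = 0 := fun l =>
      (Finset.sum_eq_zero_iff_of_nonneg (fun l _ => ha0 l)).1 h l (Finset.mem_univ _)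
    simp [this]
  · set A := ∑ l', a l' with hA
    have hA0 : 0 ≤ A := Finset.sum_nonneg fun l _ => ha0 l
    have e : ∀ l, |P * (a l / A) - (L : ℝ)⁻¹ * a l| = a l * (|(L : ℝ)⁻¹ * A - P| / A) := by
      intro l
      have : P * (a l / A) - (L : ℝ)⁻¹ * a l = (a l / A) * (P - (L : ℝ)⁻¹ * A) := by
        field_simp
      rw [this, abs_mul, abs_sub_comm, abs_of_nonneg (div_nonneg (ha0 l) hA0)]
      ring
    simp only [e]
    rw [← Finset.sum_mul, ← hA, mul_div_cancel₀ _ h]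

lemma hat_diff (PS : 𝒮 → ℝ) (pU : 𝒮 → 𝒰 → ℝ) (W : 𝒰 → 𝒮 → 𝒵 → ℝ)
    (hPS : IsPMF PS) (hpU : ∀ s, IsPMF (pU s)) (hW : ∀ u s, IsPMF (W u s))
    {n K M L : ℕ} (C : Codebook 𝒰 n K M L) :
    ∑ z : Fin n → 𝒵, |PhatZ PS pU W C z - ∑ k, ∑ m, ∑ s : Fin n → 𝒮, ∑ l,
        (K : ℝ)⁻¹ * (M : ℝ)⁻¹ * ((L : ℝ)⁻¹ * ∏ i, PSgivenU PS pU (s i) (C (k, m, l) i)) *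
          ∏ i, W (C (k, m, l) i) (s i) (z i)|
      ≤ ∑ k, ∑ m, (K : ℝ)⁻¹ * (M : ℝ)⁻¹ * ∑ s : Fin n → 𝒮,
        |(L : ℝ)⁻¹ * ∑ l, ∏ i, PSgivenU PS pU (s i) (C (k, m, l) i) - ∏ i, PS (s i)| := by
  have hWs : ∀ (u : Fin n → 𝒰) (s : Fin n → 𝒮),
      ∑ z : Fin n → 𝒵, ∏ i, W (u i) (s i) (z i) = 1 := by
    intro u s
    rw [sum_pi_prod (fun i z => W (u i) (s i) z)]
    simp [(hW _ _).2]
  calc _ ≤ ∑ z : Fin n → 𝒵, ∑ k, ∑ m, ∑ s : Fin n → 𝒮, ∑ l, (K : ℝ)⁻¹ * (M : ℝ)⁻¹ *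
          |(∏ i, PS (s i)) * likelihood PS pU C k m l s
        - (L : ℝ)⁻¹ * ∏ i, PSgivenU PS pU (s i) (C (k, m, l) i)| *
          ∏ i, W (C (k, m, l) i) (s i) (z i) := by
        refine Finset.sum_le_sum fun z _ => ?_
        unfold PhatZ
        simp only [← Finset.sum_sub_distrib]
        refine (Finset.abs_sum_le_sum_abs _ _).trans (Finset.sum_le_sum fun k _ => ?_)
        refine (Finset.abs_sum_le_sum_abs _ _).trans (Finset.sum_le_sum fun m _ => ?_)
        refine (Finset.abs_sum_le_sum_abs _ _).trans (Finset.sum_le_sum fun s _ => ?_)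
        refine (Finset.abs_sum_le_sum_abs _ _).trans (Finset.sum_le_sum fun l _ => ?_)
        have h3 : 0 ≤ ∏ i, W (C (k, m, l) i) (s i) (z i) :=
          Finset.prod_nonneg fun i _ => (hW _ _).1 _
        rw [← sub_mul, abs_mul, abs_of_nonneg h3]
        refine mul_le_mul_of_nonneg_right (le_of_eq ?_) h3
        rw [mul_assoc _ (∏ i, PS (s i)), ← mul_sub, abs_mul,
          abs_of_nonneg (by positivity : 0 ≤ (K : ℝ)⁻¹ * (M : ℝ)⁻¹)]
    _ = ∑ k, ∑ m, ∑ s : Fin n → 𝒮, ∑ l, (K : ℝ)⁻¹ * (M : ℝ)⁻¹ *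
          |(∏ i, PS (s i)) * likelihood PS pU C k m l s
        - (L : ℝ)⁻¹ * ∏ i, PSgivenU PS pU (s i) (C (k, m, l) i)| := by
        rw [Finset.sum_comm]; refine Finset.sum_congr rfl fun k _ => ?_
        rw [Finset.sum_comm]; refine Finset.sum_congr rfl fun m _ => ?_
        rw [Finset.sum_comm]; refine Finset.sum_congr rfl fun s _ => ?_
        rw [Finset.sum_comm]; refine Finset.sum_congr rfl fun l _ => ?_
        rw [← Finset.mul_sum, hWs, mul_one]
    _ ≤ _ := by
        refine Finset.sum_le_sum fun k _ => Finset.sum_le_sum fun m _ => ?_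
        rw [Finset.mul_sum]
        refine Finset.sum_le_sum fun s _ => ?_
        rw [← Finset.mul_sum]
        exact mul_le_mul_of_nonneg_left (encoder_tv PS pU hPS hpU C k m s) (by positivity)

lemma Q_eq (PS : 𝒮 → ℝ) (pU : 𝒮 → 𝒰 → ℝ) (W : 𝒰 → 𝒮 → 𝒵 → ℝ)
    {n K M L : ℕ} (C : Codebook 𝒰 n K M L) (z : Fin n → 𝒵) :
    ∑ k, ∑ m, ∑ s : Fin n → 𝒮, ∑ l,
        (K : ℝ)⁻¹ * (M : ℝ)⁻¹ * ((L : ℝ)⁻¹ * ∏ i, PSgivenU PS pU (s i) (C (k, m, l) i)) *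
          ∏ i, W (C (k, m, l) i) (s i) (z i)
    = (Fintype.card (Fin K × Fin M × Fin L) : ℝ)⁻¹ * ∑ j : Fin K × Fin M × Fin L,
        ∏ i, ((∑ s, PS s * pU s (C j i) * W (C j i) s (z i)) / PU PS pU (C j i)) := by
  rw [Fintype.sum_prod_type, Finset.mul_sum]
  refine Finset.sum_congr rfl fun k _ => ?_
  rw [Fintype.sum_prod_type, Finset.mul_sum]
  refine Finset.sum_congr rfl fun m _ => ?_
  rw [Finset.sum_comm, Finset.mul_sum]
  refine Finset.sum_congr rfl fun l _ => ?_
  have : ∀ i, (∑ s, PS s * pU s (C (k, m, l) i) * W (C (k, m, l) i) s (z i)) /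
      PU PS pU (C (k, m, l) i)
      = ∑ s, PSgivenU PS pU s (C (k, m, l) i) * W (C (k, m, l) i) s (z i) := by
    intro i
    rw [Finset.sum_div]
    refine Finset.sum_congr rfl fun s _ => ?_
    unfold PSgivenU; ring
  simp only [this]
  rw [← sum_pi_prod (fun i s => PSgivenU PS pU s (C (k, m, l) i) * W (C (k, m, l) i) s (z i)),
    Finset.mul_sum]
  refine Finset.sum_congr rfl fun s _ => ?_
  rw [Finset.prod_mul_distrib]
  simp only [Fintype.card_prod, Fintype.card_fin, Nat.cast_mul, mul_inv]
  ring

lemma exp_tv (PS : 𝒮 → ℝ) (pU : 𝒮 → 𝒰 → ℝ) (W : 𝒰 → 𝒮 → 𝒵 → ℝ)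
    (hPS : IsPMF PS) (hpU : ∀ s, IsPMF (pU s)) (hW : ∀ u s, IsPMF (W u s))
    (R1 R2 : ℝ)
    (hcov1 : mutualInfo (fun u s => PS s * pU s u) < R1)
    (hcov2 : mutualInfo (fun u z => ∑ s, PS s * pU s u * W u s z) < R2) :
    ∃ x y : ℝ, 0 ≤ x ∧ x < 1 ∧ 0 ≤ y ∧ y < 1 ∧ ∀ n K M L : ℕ, 0 < K → 0 < M →
      (2 : ℝ) ^ ((n : ℝ) * R1) ≤ L → (2 : ℝ) ^ ((n : ℝ) * R2) ≤ K * M * L →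
      ∑ C : Codebook 𝒰 n K M L, cbProb (PU PS pU) C *
        ∑ z : Fin n → 𝒵, |PhatZ PS pU W C z - ∏ i, PZ PS pU W (z i)|
        ≤ 3 * x ^ n + 3 * y ^ n := by
  have hs1 : ∑ u, ∑ s, PS s * pU s u = 1 := by
    rw [Finset.sum_comm]; simp only [← Finset.mul_sum, (hpU _).2, mul_one, hPS.2]
  have hpa2 : ∀ u, ∑ z, ∑ s, PS s * pU s u * W u s z = PU PS pU u := by
    intro u
    rw [Finset.sum_comm]
    simp only [← Finset.mul_sum, (hW _ _).2, mul_one]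
    rfl
  have hpb1 : ∀ s, ∑ u, PS s * pU s u = PS s := by
    intro s; rw [← Finset.mul_sum, (hpU s).2, mul_one]
  obtain ⟨x, hx0, hx1, hx⟩ := soft_tv (fun u s => PS s * pU s u)
    (fun u s => mul_nonneg (hPS.1 s) ((hpU s).1 u)) hs1 R1 hcov1
  obtain ⟨y, hy0, hy1, hy⟩ := soft_tv (fun u z => ∑ s, PS s * pU s u * W u s z)
    (fun u z => Finset.sum_nonneg fun s _ =>
      mul_nonneg (mul_nonneg (hPS.1 s) ((hpU s).1 u)) ((hW u s).1 z))
    (by simp only [hpa2]; exact hs1) R2 hcov2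
  refine ⟨x, y, hx0, hx1, hy0, hy1, ?_⟩
  intro n K M L hK hM hL hN
  have hcb : ∀ C : Codebook 𝒰 n K M L, 0 ≤ cbProb (PU PS pU) C := fun C =>
    Finset.prod_nonneg fun j _ => Finset.prod_nonneg fun i _ => PU_nonneg PS pU hPS hpU _
  have h1 : ∀ k m, ∑ C : Codebook 𝒰 n K M L, cbProb (PU PS pU) C *
      ∑ s : Fin n → 𝒮,
        |(L : ℝ)⁻¹ * ∑ l, ∏ i, PSgivenU PS pU (s i) (C (k, m, l) i) - ∏ i, PS (s i)|
      ≤ 3 * x ^ n := by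
    intro k m
    have := hx n (Fin K × Fin M × Fin L) (Fin L) (fun l => (k, m, l))
      (fun a b h => by simpa using h) (by simpa using hL)
    simp only [hpb1, Fintype.card_fin] at this
    exact this
  have h2 : ∑ C : Codebook 𝒰 n K M L, cbProb (PU PS pU) C *
      ∑ z : Fin n → 𝒵, |(Fintype.card (Fin K × Fin M × Fin L) : ℝ)⁻¹ *
        ∑ j : Fin K × Fin M × Fin L,
        ∏ i, ((∑ s, PS s * pU s (C j i) * W (C j i) s (z i)) / PU PS pU (C j i))
        - ∏ i, PZ PS pU W (z i)| ≤ 3 * y ^ n := by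
    have := hy n (Fin K × Fin M × Fin L) (Fin K × Fin M × Fin L) id Function.injective_id
      (by simpa [mul_assoc] using hN)
    simp only [hpa2, id] at this
    exact this
  calc _ ≤ ∑ C : Codebook 𝒰 n K M L, cbProb (PU PS pU) C *
        ((∑ k, ∑ m, (K : ℝ)⁻¹ * (M : ℝ)⁻¹ * ∑ s : Fin n → 𝒮,
        |(L : ℝ)⁻¹ * ∑ l, ∏ i, PSgivenU PS pU (s i) (C (k, m, l) i) - ∏ i, PS (s i)|)
        + ∑ z : Fin n → 𝒵, |(Fintype.card (Fin K × Fin M × Fin L) : ℝ)⁻¹ *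
        ∑ j : Fin K × Fin M × Fin L,
        ∏ i, ((∑ s, PS s * pU s (C j i) * W (C j i) s (z i)) / PU PS pU (C j i))
        - ∏ i, PZ PS pU W (z i)|) := by
        refine Finset.sum_le_sum fun C _ => mul_le_mul_of_nonneg_left ?_ (hcb C)
        have hd := hat_diff PS pU W hPS hpU hW C
        simp only [Q_eq] at hd
        refine le_trans ?_ (add_le_add_left hd _)
        rw [← Finset.sum_add_distrib]
        exact Finset.sum_le_sum fun z _ => abs_sub_le _ _ _
    _ = (∑ k : Fin K, ∑ m : Fin M, (K : ℝ)⁻¹ * (M : ℝ)⁻¹ *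
          ∑ C : Codebook 𝒰 n K M L, cbProb (PU PS pU) C * ∑ s : Fin n → 𝒮,
        |(L : ℝ)⁻¹ * ∑ l, ∏ i, PSgivenU PS pU (s i) (C (k, m, l) i) - ∏ i, PS (s i)|)
        + ∑ C : Codebook 𝒰 n K M L, cbProb (PU PS pU) C *
          ∑ z : Fin n → 𝒵, |(Fintype.card (Fin K × Fin M × Fin L) : ℝ)⁻¹ *
        ∑ j : Fin K × Fin M × Fin L,
        ∏ i, ((∑ s, PS s * pU s (C j i) * W (C j i) s (z i)) / PU PS pU (C j i))
        - ∏ i, PZ PS pU W (z i)| := by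
        simp only [mul_add, Finset.sum_add_distrib]
        congr 1
        simp only [Finset.mul_sum (s := (Finset.univ : Finset (Fin K))),
          Finset.mul_sum (s := (Finset.univ : Finset (Fin M))),
          Finset.mul_sum (s := (Finset.univ : Finset (Codebook 𝒰 n K M L)))]
        rw [Finset.sum_comm]; refine Finset.sum_congr rfl fun k _ => ?_
        rw [Finset.sum_comm]; refine Finset.sum_congr rfl fun m _ => ?_
        refine Finset.sum_congr rfl fun C _ => ?_
        ring
    _ ≤ (∑ k : Fin K, ∑ m : Fin M, (K : ℝ)⁻¹ * (M : ℝ)⁻¹ * (3 * x ^ n)) + 3 * y ^ n := by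
        refine add_le_add ?_ h2
        refine Finset.sum_le_sum fun k _ => Finset.sum_le_sum fun m _ => ?_
        exact mul_le_mul_of_nonneg_left (h1 k m) (by positivity)
    _ = _ := by
        have : (K : ℝ) ≠ 0 := by positivity
        have : (M : ℝ) ≠ 0 := by positivity
        simp only [Finset.sum_const, Finset.card_univ, Fintype.card_fin, nsmul_eq_mul]
        field_simp

end

theorem soft_covering_likelihood_encoder
    {𝒰 𝒮 𝒵 : Type} [Fintype 𝒰] [Fintype 𝒮] [Fintype 𝒵] [DecidableEq 𝒰]
    (PS : 𝒮 → ℝ) (pU : 𝒮 → 𝒰 → ℝ) (W : 𝒰 → 𝒮 → 𝒵 → ℝ)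
    (hPS : IsPMF PS) (hpU : ∀ s, IsPMF (pU s)) (hW : ∀ u s, IsPMF (W u s))
    (RK R R' : ℝ) (hRK : 0 ≤ RK) (hR : 0 ≤ R) (hR' : 0 ≤ R')
    (hcov1 : mutualInfo (fun u s => PS s * pU s u) < R')
    (hcov2 : mutualInfo (fun u z => ∑ s, PS s * pU s u * W u s z) < R + RK + R') :
    Filter.Tendsto
      (fun n : ℕ => expDiv PS pU W n
        ⌈(2 : ℝ) ^ ((n : ℝ) * RK)⌉₊ ⌈(2 : ℝ) ^ ((n : ℝ) * R)⌉₊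
        ⌈(2 : ℝ) ^ ((n : ℝ) * R')⌉₊)
      Filter.atTop (nhds 0) := by
  obtain ⟨x, y, hx0, hx1, hy0, hy1, hxy⟩ := exp_tv PS pU W hPS hpU hW R' (R + RK + R') hcov1 hcov2
  have hl2 : 0 < Real.log 2 := Real.log_pos (by norm_num)
  have hZ0 := PZ_nonneg PS pU W hPS hpU hW
  set b : ℝ := 1 + ∑ z, (PZ PS pU W z)⁻¹ with hb
  have hb1 : 1 ≤ b := by
    have : 0 ≤ ∑ z, (PZ PS pU W z)⁻¹ := Finset.sum_nonneg fun z _ => inv_nonneg.2 (hZ0 z)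
    linarith
  have hbz : ∀ z, PZ PS pU W z ≠ 0 → 1 ≤ b * PZ PS pU W z := by
    intro z hz
    have hpos : 0 < PZ PS pU W z := lt_of_le_of_ne (hZ0 z) hz.symm
    have : (PZ PS pU W z)⁻¹ ≤ ∑ z, (PZ PS pU W z)⁻¹ :=
      Finset.single_le_sum (f := fun z => (PZ PS pU W z)⁻¹)
        (fun z _ => inv_nonneg.2 (hZ0 z)) (Finset.mem_univ z)
    rw [← inv_mul_cancel₀ hz]
    exact mul_le_mul_of_nonneg_right (by linarith) hpos.le
  have bound : ∀ n : ℕ, ‖expDiv PS pU W n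
        ⌈(2 : ℝ) ^ ((n : ℝ) * RK)⌉₊ ⌈(2 : ℝ) ^ ((n : ℝ) * R)⌉₊
        ⌈(2 : ℝ) ^ ((n : ℝ) * R')⌉₊‖
      ≤ (1 + n * Real.log b) / Real.log 2 * (3 * x ^ n + 3 * y ^ n) := by
    intro n
    have c1 := Nat.le_ceil ((2 : ℝ) ^ ((n : ℝ) * RK))
    have c2 := Nat.le_ceil ((2 : ℝ) ^ ((n : ℝ) * R))
    have c3 := Nat.le_ceil ((2 : ℝ) ^ ((n : ℝ) * R'))
    have hK : 0 < ⌈(2 : ℝ) ^ ((n : ℝ) * RK)⌉₊ := Nat.ceil_pos.2 (by positivity)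
    have hM : 0 < ⌈(2 : ℝ) ^ ((n : ℝ) * R)⌉₊ := Nat.ceil_pos.2 (by positivity)
    generalize ⌈(2 : ℝ) ^ ((n : ℝ) * RK)⌉₊ = K at *
    generalize ⌈(2 : ℝ) ^ ((n : ℝ) * R)⌉₊ = M at *
    generalize ⌈(2 : ℝ) ^ ((n : ℝ) * R')⌉₊ = L at *
    have hN : (2 : ℝ) ^ ((n : ℝ) * (R + RK + R')) ≤ K * M * L := by
      have : (2 : ℝ) ^ ((n : ℝ) * (R + RK + R'))
          = (2 : ℝ) ^ ((n : ℝ) * RK) * (2 : ℝ) ^ ((n : ℝ) * R) * (2 : ℝ) ^ ((n : ℝ) * R') := by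
        rw [← Real.rpow_add (by norm_num), ← Real.rpow_add (by norm_num)]
        congr 1; ring
      rw [this]
      gcongr
    have htv := hxy n K M L hK hM c3 hN
    have hlb : 0 ≤ Real.log b := Real.log_nonneg hb1
    rw [Real.norm_eq_abs]
    unfold expDiv
    refine le_trans (Finset.abs_sum_le_sum_abs _ _) ?_
    refine le_trans ?_ (mul_le_mul_of_nonneg_left htv (by positivity))
    rw [Finset.mul_sum]
    refine Finset.sum_le_sum fun C _ => ?_
    have hcb : 0 ≤ cbProb (PU PS pU) C :=
      Finset.prod_nonneg fun j _ => Finset.prod_nonneg fun i _ => PU_nonneg PS pU hPS hpU _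
    rw [abs_mul, abs_of_nonneg hcb, mul_left_comm]
    refine mul_le_mul_of_nonneg_left ?_ hcb
    have := kl_abs_le (PhatZ PS pU W C) (fun z => ∏ i, PZ PS pU W (z i))
      (PhatZ_nonneg PS pU W hPS hpU hW C) (fun z => Finset.prod_nonneg fun i _ => hZ0 _)
      (b ^ n) (one_le_pow₀ hb1) (by
        intro z
        by_cases hz : ∏ i, PZ PS pU W (z i) = 0
        · rw [PhatZ_eq_zero PS pU W hPS hpU hW C z hz, hz, mul_zero]
        · refine (PhatZ_le_one PS pU W hPS hpU hW C z).trans ?_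
          have e : b ^ n * ∏ i, PZ PS pU W (z i) = ∏ i, b * PZ PS pU W (z i) := by
            rw [Finset.prod_mul_distrib]; simp
          rw [e]
          have : ∏ _i : Fin n, (1 : ℝ) ≤ ∏ i, b * PZ PS pU W (z i) :=
            Finset.prod_le_prod (fun _ _ => zero_le_one) fun i _ =>
              hbz _ (Finset.prod_ne_zero_iff.1 hz i (Finset.mem_univ i))
          simpa using this)
    rw [Real.log_pow] at this
    exact this
  refine squeeze_zero_norm bound ?_
  have tx := tendsto_pow_atTop_nhds_zero_of_lt_one hx0 hx1
  have ty := tendsto_pow_atTop_nhds_zero_of_lt_one hy0 hy1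
  have tnx := tendsto_self_mul_const_pow_of_lt_one hx0 hx1
  have tny := tendsto_self_mul_const_pow_of_lt_one hy0 hy1
  have := ((tx.add ty).const_mul (3 / Real.log 2)).add
    ((tnx.add tny).const_mul (3 * Real.log b / Real.log 2))
  simp only [add_zero, mul_zero] at this
  refine this.congr fun n => ?_
  ring

end SoftCovering
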